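/- Let α ∈ (0,1), ϱ ≥ 1, t > 0 and x > 0. Then: (a) a_k(t,x) > 0 for every integer k ≥ 0; (b) a_k(t,x) → 0 as k → ∞; (c) a_{k+1}(t,x) < a_k(t,x) for every integer k ≥ 1, and 2 a_0(t,x) > a_1(t,x). -/

import Mathlib

open Real MeasureTheory Filter Topology intervalIntegral

/-- The two-parameter Mittag-Leffler function `E_{α,β}(z) = ∑ z^n / Γ(αn+β)`. -/
noncomputable def ML (a b z : ℝ) : ℝ :=
  ∑' n : ℕ, z ^ n / Real.Gamma (a * n + b)

/-- The coefficients `a_k(t,x)` of the alternating-series decomposition of `u_{α,ϱ}`. -/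
noncomputable def aCoef (α ϱ t x : ℝ) (k : ℕ) : ℝ :=
  if k = 0 then
    ∫ ξ in (0 : ℝ)..(Real.pi / (2 * x)), ML α 1 (t ^ α * (1 - ξ ^ (2 * ϱ))) * Real.cos (x * ξ)
  else
    (-1 : ℝ) ^ k * ∫ ξ in ((2 * (k : ℝ) - 1) * Real.pi / (2 * x))..
        ((2 * (k : ℝ) + 1) * Real.pi / (2 * x)),
      ML α 1 (t ^ α * (1 - ξ ^ (2 * ϱ))) * Real.cos (x * ξ)


lemma gamma_ratio {a x : ℝ} (ha : 0 < a) (ha1 : a < 1) (hx : 0 < x) :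
    x * (x + a) ^ (a - 1) * Real.Gamma x ≤ Real.Gamma (x + a) := by
  have h := Real.Gamma_mul_add_mul_le_rpow_Gamma_mul_rpow_Gamma (s := x + a) (t := x + a + 1)
    (a := a) (b := 1 - a) (by linarith) (by linarith) ha (by linarith) (by ring)
  have e : a * (x + a) + (1 - a) * (x + a + 1) = x + 1 := by ring
  have hxa : 0 < x + a := by linarith
  have hG := Real.Gamma_pos_of_pos hxa
  rw [e, Real.Gamma_add_one hx.ne', Real.Gamma_add_one hxa.ne',
    Real.mul_rpow hxa.le hG.le] at h
  have e2 : Real.Gamma (x + a) ^ a * ((x + a) ^ (1 - a) * Real.Gamma (x + a) ^ (1 - a))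
      = (x + a) ^ (1 - a) * Real.Gamma (x + a) := by
    rw [mul_left_comm, ← Real.rpow_add hG]; simp
  rw [e2] at h
  have e3 : (x + a) ^ (a - 1) * (x + a) ^ (1 - a) = 1 := by
    rw [← Real.rpow_add hxa]; simp
  calc x * (x + a) ^ (a - 1) * Real.Gamma x = (x + a) ^ (a - 1) * (x * Real.Gamma x) := by ring
    _ ≤ (x + a) ^ (a - 1) * ((x + a) ^ (1 - a) * Real.Gamma (x + a)) := by gcongr
    _ = _ := by rw [← mul_assoc, e3, one_mul]

lemma ml_arg_pos {a b : ℝ} (ha : 0 < a) (hb : 0 < b) (n : ℕ) : 0 < a * n + b := by positivity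

lemma ml_summable {a b : ℝ} (ha : 0 < a) (ha1 : a < 1) (hb : 0 < b) (z : ℝ) :
    Summable (fun n : ℕ => z ^ n / Real.Gamma (a * n + b)) := by
  rcases eq_or_ne z 0 with rfl | hz
  · refine summable_of_ne_finset_zero (s := {0}) ?_
    intro n hn
    simp at hn
    simp [hn]
  have hX : Tendsto (fun n : ℕ => a * (n : ℝ) + b) atTop atTop :=
    tendsto_atTop_add_const_right _ _ (tendsto_natCast_atTop_atTop.const_mul_atTop ha)
  have hXa : Tendsto (fun n : ℕ => a * (n : ℝ) + b + a) atTop atTop :=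
    tendsto_atTop_add_const_right _ _ hX
  have hlim : Tendsto (fun n : ℕ => |z| * (2 * (a * (n : ℝ) + b + a) ^ (-a))) atTop (𝓝 0) := by
    have := (((tendsto_rpow_neg_atTop ha).comp hXa).const_mul 2).const_mul |z|
    simpa using this
  refine summable_of_ratio_test_tendsto_lt_one (l := 0) one_pos ?_ ?_
  · refine Eventually.of_forall fun n => ?_
    have := Real.Gamma_pos_of_pos (ml_arg_pos ha hb n)
    positivity
  · refine tendsto_of_tendsto_of_tendsto_of_le_of_le' tendsto_const_nhds hlim ?_ ?_
    · exact Eventually.of_forall fun n => by positivity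
    · filter_upwards [hX.eventually_ge_atTop a] with n hn
      set x := a * (n : ℝ) + b with hxdef
      have hx : 0 < x := ml_arg_pos ha hb n
      have e : a * ((n + 1 : ℕ) : ℝ) + b = x + a := by push_cast; rw [hxdef]; ring
      rw [e]
      have h := gamma_ratio ha ha1 hx
      have hG := Real.Gamma_pos_of_pos hx
      have hxa : 0 < x + a := by linarith
      have hG' := Real.Gamma_pos_of_pos hxa
      have e4 : (x + a) ^ a = (x + a) * (x + a) ^ (a - 1) := by
        rw [← Real.rpow_one_add' hxa.le (by simpa using ha.ne')]; congr 1; ring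
      have h1 : (x + a) ^ a * Real.Gamma x ≤ 2 * Real.Gamma (x + a) := by
        rw [e4]
        have hp : 0 < (x + a) ^ (a - 1) * Real.Gamma x := by positivity
        nlinarith
      have h2 : Real.Gamma x / Real.Gamma (x + a) ≤ 2 * (x + a) ^ (-a) := by
        rw [Real.rpow_neg hxa.le, ← div_eq_mul_inv,
          div_le_div_iff₀ hG' (Real.rpow_pos_of_pos hxa a)]
        linarith
      have : ‖z ^ (n + 1) / Real.Gamma (x + a)‖ / ‖z ^ n / Real.Gamma x‖
          = |z| * (Real.Gamma x / Real.Gamma (x + a)) := by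
        simp only [norm_div, norm_pow, Real.norm_eq_abs, abs_of_pos hG, abs_of_pos hG']
        have : |z| ≠ 0 := by simpa using hz
        field_simp
        ring
      rw [this]
      gcongr

lemma ml_continuous {a b : ℝ} (ha : 0 < a) (ha1 : a < 1) (hb : 0 < b) :
    Continuous (ML a b) := by
  rw [continuous_iff_continuousAt]
  intro z
  have : ContinuousOn (ML a b) (Metric.closedBall 0 (|z| + 1)) := by
    refine continuousOn_tsum (u := fun n : ℕ => (|z| + 1) ^ n / Real.Gamma (a * n + b))
      (fun n => by fun_prop) (ml_summable ha ha1 hb _) ?_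
    intro n y hy
    have hG := Real.Gamma_pos_of_pos (ml_arg_pos ha hb n)
    simp only [norm_div, norm_pow, Real.norm_eq_abs, abs_of_pos hG]
    simp at hy
    gcongr
  refine this.continuousAt (Metric.closedBall_mem_nhds_of_mem ?_)
  simp

lemma ml_deriv {a : ℝ} (ha : 0 < a) (ha1 : a < 1) (z : ℝ) :
    HasDerivAt (ML a 1) (ML a a z / a) z := by
  have key : ∀ (n : ℕ) (y : ℝ), ((n : ℝ) + 1) * y ^ n / Real.Gamma (a * ((n + 1 : ℕ) : ℝ) + 1)
      = y ^ n / Real.Gamma (a * n + a) / a := by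
    intro n y
    have h0 : 0 < a * ((n : ℝ) + 1) := by positivity
    push_cast
    rw [Real.Gamma_add_one h0.ne']
    have : a * ((n : ℝ) + 1) = a * n + a := by ring
    rw [← this]
    have hG := Real.Gamma_pos_of_pos h0
    field_simp
  have hs : ∀ y : ℝ, Summable (fun n : ℕ => (n : ℝ) * y ^ (n - 1) / Real.Gamma (a * n + 1)) := by
    intro y
    rw [← summable_nat_add_iff 1]
    have := (ml_summable ha ha1 ha y).div_const a
    refine this.congr fun n => ?_
    rw [← key]; push_cast; simp
  have hd := hasDerivAt_tsum_of_isPreconnected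
    (g := fun (n : ℕ) (y : ℝ) => y ^ n / Real.Gamma (a * n + 1))
    (g' := fun (n : ℕ) (y : ℝ) => (n : ℝ) * y ^ (n - 1) / Real.Gamma (a * n + 1))
    (t := Metric.ball 0 (|z| + 1)) (y₀ := z) (y := z)
    (hs (|z| + 1)) Metric.isOpen_ball (convex_ball _ _).isPreconnected
    (fun n y _ => (hasDerivAt_pow n y).div_const _) ?_ (by simp) (ml_summable ha ha1 one_pos z)
    (by simp)
  · have e : ∑' n : ℕ, (n : ℝ) * z ^ (n - 1) / Real.Gamma (a * n + 1) = ML a a z / a := by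
      rw [(hs z).tsum_eq_zero_add, ML, ← tsum_div_const]
      simp only [Nat.cast_zero, zero_mul, zero_div, zero_add, Nat.add_sub_cancel]
      exact tsum_congr fun n => by rw [← key]; push_cast; rfl
    rw [e] at hd
    exact hd
  · intro n y hy
    have hG := Real.Gamma_pos_of_pos (ml_arg_pos ha one_pos n)
    simp only [norm_div, norm_pow, norm_mul, Real.norm_eq_abs, abs_of_pos hG, Nat.abs_cast]
    simp at hy
    gcongr

lemma ml_shift {a b : ℝ} (ha : 0 < a) (ha1 : a < 1) (hb : 0 < b) (z : ℝ) :
    ML a b z = 1 / Real.Gamma b + z * ML a (b + a) z := by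
  unfold ML
  rw [(ml_summable ha ha1 hb z).tsum_eq_zero_add, ← tsum_mul_left]
  congr 1
  · simp
  · refine tsum_congr fun n => ?_
    have : a * ((n + 1 : ℕ) : ℝ) + b = a * n + (b + a) := by push_cast; ring
    rw [this, pow_succ]; ring

lemma beta_real {p q t : ℝ} (hp : 0 < p) (hq : 0 < q) (ht : 0 < t) :
    ∫ s in (0:ℝ)..t, s ^ (p - 1) * (t - s) ^ (q - 1)
      = t ^ (p + q - 1) * (Real.Gamma p * Real.Gamma q / Real.Gamma (p + q)) := by
  have h := Complex.betaIntegral_scaled (p : ℂ) (q : ℂ) ht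
  rw [Complex.betaIntegral_eq_Gamma_mul_div _ _ (by simpa) (by simpa)] at h
  have e : ∫ x in (0:ℝ)..t, (x : ℂ) ^ ((p : ℂ) - 1) * ((t : ℂ) - x) ^ ((q : ℂ) - 1)
      = ((∫ s in (0:ℝ)..t, s ^ (p - 1) * (t - s) ^ (q - 1) : ℝ) : ℂ) := by
    rw [← intervalIntegral.integral_ofReal]
    refine intervalIntegral.integral_congr fun s hs => ?_
    rw [Set.uIcc_of_le ht.le] at hs
    rw [Complex.ofReal_mul, Complex.ofReal_cpow hs.1, Complex.ofReal_cpow (by linarith [hs.2])]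
    push_cast; rfl
  rw [e] at h
  apply Complex.ofReal_injective
  rw [h, Complex.ofReal_mul, Complex.ofReal_cpow ht.le]
  push_cast
  simp only [← Complex.Gamma_ofReal, Complex.ofReal_add]

lemma beta_integrable {p q t : ℝ} (hp : 0 < p) (hq : 0 < q) (ht : 0 < t) :
    IntervalIntegrable (fun s => s ^ (p - 1) * (t - s) ^ (q - 1)) volume 0 t := by
  by_contra hc
  have h := beta_real hp hq ht
  rw [intervalIntegral.integral_undef hc] at h
  have h1 := Real.Gamma_pos_of_pos hp
  have h2 := Real.Gamma_pos_of_pos hq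
  have h3 := Real.Gamma_pos_of_pos (add_pos hp hq)
  have : 0 < t ^ (p + q - 1) * (Real.Gamma p * Real.Gamma q / Real.Gamma (p + q)) := by positivity
  linarith

lemma conv_integrable {a b c t : ℝ} (ha : 0 < a) (ha1 : a < 1) (hb : 0 < b) (hc : 0 < c)
    (ht : 0 < t) :
    IntervalIntegrable (fun s => s ^ (b - 1) * ML a b (-s ^ a) * (t - s) ^ (c - 1)) volume 0 t := by
  have h := (beta_integrable hb hc ht).mul_continuousOn (g := fun s => ML a b (-s ^ a)) (by
    apply Continuous.continuousOn
    exact (ml_continuous ha ha1 hb).comp (Real.continuous_rpow_const ha.le).neg)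
  refine h.congr ?_
  intro s _
  simp only
  ring

lemma conv_eq {a b c t : ℝ} (ha : 0 < a) (ha1 : a < 1) (hb : 0 < b) (hc : 0 < c)
    (ht : 0 < t) :
    ∫ s in (0:ℝ)..t, s ^ (b - 1) * ML a b (-s ^ a) * (t - s) ^ (c - 1)
      = Real.Gamma c * (t ^ (b + c - 1) * ML a (b + c) (-t ^ a)) := by
  set F : ℕ → ℝ → ℝ := fun n s =>
    (-1) ^ n / Real.Gamma (a * n + b) * (s ^ ((a * n + b) - 1) * (t - s) ^ (c - 1)) with hF
  have hbint : ∀ n : ℕ, IntegrableOn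
      (fun s => s ^ ((a * n + b) - 1) * (t - s) ^ (c - 1)) (Set.Ioc 0 t) := fun n =>
    (intervalIntegrable_iff_integrableOn_Ioc_of_le ht.le).1
      (beta_integrable (ml_arg_pos ha hb n) hc ht)
  have hFint : ∀ n, IntegrableOn (F n) (Set.Ioc 0 t) := fun n => (hbint n).const_mul _
  have hval : ∀ n : ℕ, ∫ s in Set.Ioc 0 t, s ^ ((a * n + b) - 1) * (t - s) ^ (c - 1)
      = t ^ (a * n + b + c - 1) * (Real.Gamma (a * n + b) * Real.Gamma c
        / Real.Gamma (a * n + b + c)) := fun n => by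
    rw [← intervalIntegral.integral_of_le ht.le]
    exact beta_real (ml_arg_pos ha hb n) hc ht
  have hpow : ∀ n : ℕ, t ^ (a * n + b + c - 1) = t ^ (b + c - 1) * (t ^ a) ^ n := fun n => by
    rw [← Real.rpow_natCast, ← Real.rpow_mul ht.le, ← Real.rpow_add ht]; congr 1; ring
  have hnorm : ∀ n : ℕ, ∫ s in Set.Ioc 0 t, ‖F n s‖ = (Real.Gamma c * t ^ (b + c - 1)) *
      ((t ^ a) ^ n / Real.Gamma (a * n + (b + c))) := fun n => by
    have hG := Real.Gamma_pos_of_pos (ml_arg_pos ha hb n)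
    have : ∫ s in Set.Ioc 0 t, ‖F n s‖ = ∫ s in Set.Ioc 0 t,
        1 / Real.Gamma (a * n + b) * (s ^ ((a * n + b) - 1) * (t - s) ^ (c - 1)) := by
      refine setIntegral_congr_fun measurableSet_Ioc fun s hs => ?_
      have h1 : 0 ≤ s ^ ((a * n + b) - 1) := Real.rpow_nonneg hs.1.le _
      have h2 : 0 ≤ (t - s) ^ (c - 1) := Real.rpow_nonneg (by linarith [hs.2]) _
      simp only [hF, norm_mul, norm_div, norm_pow, norm_neg, norm_one, one_pow, Real.norm_eq_abs,
        abs_of_pos hG, abs_of_nonneg h1, abs_of_nonneg h2]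
    rw [this, MeasureTheory.integral_const_mul, hval, hpow, ← add_assoc]
    field_simp
  have hsum : Summable fun n => ∫ s in Set.Ioc 0 t, ‖F n s‖ := by
    simp_rw [hnorm]
    exact (ml_summable ha ha1 (add_pos hb hc) _).mul_left _
  have h := hasSum_integral_of_summable_integral_norm hFint hsum
  rw [intervalIntegral.integral_of_le ht.le]
  have e1 : ∫ s in Set.Ioc 0 t, s ^ (b - 1) * ML a b (-s ^ a) * (t - s) ^ (c - 1)
      = ∫ s in Set.Ioc 0 t, ∑' n, F n s := by
    refine setIntegral_congr_fun measurableSet_Ioc fun s hs => ?_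
    simp only [ML, hF]
    rw [← tsum_mul_left, ← tsum_mul_right]
    refine tsum_congr fun n => ?_
    have : s ^ (a * n + b - 1) = s ^ (b - 1) * (s ^ a) ^ n := by
      rw [← Real.rpow_natCast, ← Real.rpow_mul hs.1.le, ← Real.rpow_add hs.1]; congr 1; ring
    rw [this, neg_pow]; ring
  rw [e1, ← h.tsum_eq, ML, ← tsum_mul_left, ← tsum_mul_left]
  refine tsum_congr fun n => ?_
  have hG := Real.Gamma_pos_of_pos (ml_arg_pos ha hb n)
  rw [MeasureTheory.integral_const_mul, hval, hpow, ← add_assoc, neg_pow (t ^ a)]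
  field_simp

lemma ml_aa_pos {a : ℝ} (ha : 0 < a) (ha1 : a < 1) {t : ℝ} (ht : 0 < t) :
    0 < ML a a (-t ^ a) := by
  by_contra hneg
  push Not at hneg
  have hΓ := Real.Gamma_pos_of_pos ha
  have hgc : Continuous (fun s : ℝ => ML a a (-s ^ a)) :=
    (ml_continuous ha ha1 ha).comp (Real.continuous_rpow_const ha.le).neg
  have hcomp : IsCompact (Set.Icc 0 t ∩ {s : ℝ | ML a a (-s ^ a) ≤ 0}) :=
    isCompact_Icc.inter_right (isClosed_le hgc continuous_const)
  obtain ⟨t0, ⟨⟨h00, h0t⟩, hle⟩, hmin⟩ := hcomp.exists_isLeast ⟨t, ⟨ht.le, le_rfl⟩, hneg⟩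
  simp only [Set.mem_ofPred_eq] at hle
  have hg0 : ML a a (-(0:ℝ) ^ a) = 1 / Real.Gamma a := by
    rw [ml_shift ha ha1 ha, Real.zero_rpow ha.ne']; simp
  have ht0 : 0 < t0 := by
    rcases h00.eq_or_lt with h | h
    · rw [← h, hg0] at hle
      have : 0 < 1 / Real.Gamma a := by positivity
      linarith
    · exact h
  have hpos : ∀ s, 0 ≤ s → s < t0 → 0 < ML a a (-s ^ a) := by
    intro s hs hst
    by_contra hc
    push Not at hc
    have := hmin ⟨⟨hs, by linarith⟩, hc⟩
    linarith
  -- the equation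
  have hvolt : ∀ r : ℝ, 0 < r →
      ∫ s in (0:ℝ)..r, s ^ (a - 1) * ML a a (-s ^ a) * (r - s) ^ (a - 1)
        = r ^ (a - 1) - Real.Gamma a * (r ^ (a - 1) * ML a a (-r ^ a)) := by
    intro r hr
    rw [conv_eq ha ha1 ha ha hr, ml_shift ha ha1 ha (-r ^ a)]
    have : r ^ (a + a - 1) = r ^ (a - 1) * r ^ a := by
      rw [← Real.rpow_add hr]; congr 1; ring
    rw [this]
    field_simp
    ring
  -- choose δ
  obtain ⟨δ, hδ0, hδt, hδ⟩ : ∃ δ : ℝ, 0 < δ ∧ δ ≤ t0 / 2 ∧ δ ^ a / a < Real.Gamma a / 2 := by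
    have hlim : Tendsto (fun δ : ℝ => δ ^ a / a) (𝓝[>] 0) (𝓝 0) := by
      have := ((Real.continuous_rpow_const ha.le).div_const a).tendsto (0:ℝ)
      simp only [Real.zero_rpow ha.ne', zero_div] at this
      exact this.mono_left nhdsWithin_le_nhds
    have h1 := hlim.eventually_lt_const (show (0:ℝ) < Real.Gamma a / 2 by positivity)
    have h2 : ∀ᶠ δ : ℝ in 𝓝[>] 0, δ ∈ Set.Ioc 0 (t0 / 2) :=
      Ioc_mem_nhdsGT (by linarith)
    obtain ⟨δ, hδ1, hδ2⟩ := (h1.and h2).exists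
    exact ⟨δ, hδ2.1, hδ2.2, hδ1⟩
  set v : ℝ → ℝ := fun s => s ^ (a - 1) * ML a a (-s ^ a) with hv
  have hvc : ContinuousOn v (Set.Icc (t0 - δ) t0) := by
    refine ContinuousOn.mul ?_ hgc.continuousOn
    refine ContinuousOn.rpow_const continuousOn_id fun s hs => Or.inl ?_
    have := hs.1
    exact (show (0:ℝ) < s by linarith).ne'
  obtain ⟨t1, ht1, hmax⟩ := isCompact_Icc.exists_isMaxOn
    (Set.nonempty_Icc.2 (by linarith : t0 - δ ≤ t0)) hvc
  have hv1 : 0 < v t1 := by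
    have h1 : v (t0 - δ) ≤ v t1 := hmax ⟨le_rfl, by linarith⟩
    have h2 : 0 < v (t0 - δ) :=
      mul_pos (Real.rpow_pos_of_pos (by linarith) _) (hpos _ (by linarith) (by linarith))
    linarith
  have hv0 : v t0 ≤ 0 := mul_nonpos_of_nonneg_of_nonpos (Real.rpow_nonneg ht0.le _) hle
  have ht10 : t1 < t0 := by
    refine lt_of_le_of_ne ht1.2 fun h => ?_
    rw [h] at hv1; linarith
  have ht1p : 0 < t1 := by linarith [ht1.1]
  have hint0 : IntervalIntegrable (fun s => v s * (t0 - s) ^ (a - 1)) volume 0 t0 :=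
    conv_integrable ha ha1 ha ha ht0
  have hint1 : IntervalIntegrable (fun s => v s * (t1 - s) ^ (a - 1)) volume 0 t1 :=
    conv_integrable ha ha1 ha ha ht1p
  have hE0 := hvolt t0 ht0
  have hE1 := hvolt t1 ht1p
  have hintA : IntervalIntegrable (fun s => v s * (t0 - s) ^ (a - 1)) volume 0 t1 :=
    hint0.mono_set (by
      rw [Set.uIcc_of_le ht1p.le, Set.uIcc_of_le ht0.le]; exact Set.Icc_subset_Icc le_rfl ht10.le)
  have hintB : IntervalIntegrable (fun s => v s * (t0 - s) ^ (a - 1)) volume t1 t0 :=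
    hint0.mono_set (by
      rw [Set.uIcc_of_le ht10.le, Set.uIcc_of_le ht0.le]; exact Set.Icc_subset_Icc ht1p.le le_rfl)
  have hsplit := intervalIntegral.integral_add_adjacent_intervals hintA hintB
  set ρ : ℝ := (t0 / t1) ^ (a - 1) with hρ
  have hquot : 0 < t0 / t1 := by positivity
  have hρpos : 0 < ρ := Real.rpow_pos_of_pos hquot _
  have hA : ∫ s in (0:ℝ)..t1, v s * (t0 - s) ^ (a - 1)
      ≤ ρ * ∫ s in (0:ℝ)..t1, v s * (t1 - s) ^ (a - 1) := by
    rw [← intervalIntegral.integral_const_mul]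
    refine intervalIntegral.integral_mono_on_of_le_Ioo ht1p.le hintA (hint1.const_mul _) ?_
    intro s hs
    have hvs : 0 ≤ v s :=
      mul_nonneg (Real.rpow_nonneg hs.1.le _) (hpos s hs.1.le (by linarith [hs.2])).le
    have h1 : (t0 - s) ^ (a - 1) ≤ ρ * (t1 - s) ^ (a - 1) := by
      have h3 : 0 < t1 - s := by linarith [hs.2]
      rw [hρ, ← Real.mul_rpow hquot.le h3.le]
      refine Real.rpow_le_rpow_of_nonpos (by positivity) ?_ (by linarith)
      rw [div_mul_eq_mul_div, div_le_iff₀ ht1p]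
      nlinarith [hs.1]
    calc v s * (t0 - s) ^ (a - 1) ≤ v s * (ρ * (t1 - s) ^ (a - 1)) := by gcongr
      _ = _ := by ring
  have hKint : IntervalIntegrable (fun s : ℝ => (t0 - s) ^ (a - 1)) volume t1 t0 := by
    have := (intervalIntegral.intervalIntegrable_rpow' (a := t0 - t1) (b := 0)
      (r := a - 1) (by linarith)).comp_sub_left t0
    simpa using this
  have hKval : ∫ s in t1..t0, (t0 - s) ^ (a - 1) = (t0 - t1) ^ a / a := by
    rw [intervalIntegral.integral_comp_sub_left (fun s => s ^ (a - 1)) t0,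
      integral_rpow (Or.inl (by linarith))]
    simp [Real.zero_rpow ha.ne']
  have hB : ∫ s in t1..t0, v s * (t0 - s) ^ (a - 1) ≤ v t1 * ((t0 - t1) ^ a / a) := by
    rw [← hKval, ← intervalIntegral.integral_const_mul]
    refine intervalIntegral.integral_mono_on_of_le_Ioo ht10.le hintB (hKint.const_mul _) ?_
    intro s hs
    have h1 : v s ≤ v t1 := hmax ⟨by linarith [hs.1, ht1.1], hs.2.le⟩
    have h2 : 0 ≤ (t0 - s) ^ (a - 1) := Real.rpow_nonneg (by linarith [hs.2]) _
    gcongr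
  have hB' : (t0 - t1) ^ a / a ≤ δ ^ a / a := by
    have : t0 - t1 ≤ δ := by linarith [ht1.1]
    have : 0 ≤ t0 - t1 := by linarith
    gcongr
  have hρK : ρ * t1 ^ (a - 1) = t0 ^ (a - 1) := by
    rw [hρ, ← Real.mul_rpow hquot.le ht1p.le, div_mul_cancel₀ _ ht1p.ne']
  have hρhalf : 1 / 2 ≤ ρ := by
    have h1 : t0 / t1 ≤ 2 := by
      rw [div_le_iff₀ ht1p]; linarith [ht1.1]
    have h2 : (2:ℝ) ^ (a - 1) ≤ ρ :=
      Real.rpow_le_rpow_of_nonpos hquot h1 (by linarith)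
    have h3 : (2:ℝ) ^ (-1:ℝ) ≤ 2 ^ (a - 1) :=
      Real.rpow_le_rpow_of_exponent_le (by norm_num) (by linarith)
    rw [Real.rpow_neg_one] at h3
    linarith
  have e0 : ∫ s in (0:ℝ)..t0, v s * (t0 - s) ^ (a - 1) = t0 ^ (a - 1) - Real.Gamma a * v t0 := hE0
  have e1 : ∫ s in (0:ℝ)..t1, v s * (t1 - s) ^ (a - 1) = t1 ^ (a - 1) - Real.Gamma a * v t1 := hE1
  rw [e1, mul_sub, hρK] at hA
  have f1 : Real.Gamma a * v t0 ≤ 0 := mul_nonpos_of_nonneg_of_nonpos hΓ.le hv0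
  have f2 : v t1 * ((t0 - t1) ^ a / a) ≤ v t1 * (δ ^ a / a) := by gcongr
  have f3 : v t1 * (δ ^ a / a) < v t1 * (Real.Gamma a / 2) := by gcongr
  have f4 : 1 / 2 * (Real.Gamma a * v t1) ≤ ρ * (Real.Gamma a * v t1) := by gcongr
  linarith

lemma neg_eq_rpow {a : ℝ} (ha : 0 < a) {z : ℝ} (hz : z < 0) :
    ∃ t : ℝ, 0 < t ∧ z = -t ^ a := by
  refine ⟨(-z) ^ (1 / a), Real.rpow_pos_of_pos (by linarith) _, ?_⟩
  rw [← Real.rpow_mul (by linarith), one_div_mul_cancel ha.ne', Real.rpow_one, neg_neg]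

lemma ml_aa_pos' {a : ℝ} (ha : 0 < a) (ha1 : a < 1) (z : ℝ) : 0 < ML a a z := by
  rcases lt_or_ge z 0 with hz | hz
  · obtain ⟨t, ht, rfl⟩ := neg_eq_rpow ha hz
    exact ml_aa_pos ha ha1 ht
  · have hΓ := fun n : ℕ => Real.Gamma_pos_of_pos (ml_arg_pos ha ha n)
    refine (ml_summable ha ha1 ha z).tsum_pos (fun n => ?_) 0 ?_
    · have := hΓ n
      positivity
    · have := hΓ 0
      rw [pow_zero]; positivity

lemma ml_strictMono {a : ℝ} (ha : 0 < a) (ha1 : a < 1) : StrictMono (ML a 1) := by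
  refine strictMono_of_hasDerivAt_pos (fun z => ml_deriv ha ha1 z) fun z => ?_
  exact div_pos (ml_aa_pos' ha ha1 z) ha

lemma ml_nonneg {a : ℝ} (ha : 0 < a) (ha1 : a < 1) {t : ℝ} (ht : 0 < t) :
    0 ≤ ML a 1 (-t ^ a) := by
  have h := conv_eq (b := a) (c := 1 - a) ha ha1 ha (by linarith) ht
  have e : a + (1 - a) = 1 := by ring
  rw [e, sub_self, Real.rpow_zero, one_mul] at h
  have hΓ := Real.Gamma_pos_of_pos (show 0 < 1 - a by linarith)
  have : 0 ≤ Real.Gamma (1 - a) * ML a 1 (-t ^ a) := by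
    rw [← h]
    refine intervalIntegral.integral_nonneg ht.le fun s hs => ?_
    exact mul_nonneg (mul_nonneg (Real.rpow_nonneg hs.1 _) (ml_aa_pos' ha ha1 _).le)
      (Real.rpow_nonneg (by linarith [hs.2]) _)
  exact nonneg_of_mul_nonneg_right this hΓ

lemma ml_pos {a : ℝ} (ha : 0 < a) (ha1 : a < 1) (z : ℝ) : 0 < ML a 1 z := by
  have hz : min z 0 - 1 < 0 := by linarith [min_le_right z 0]
  obtain ⟨t, ht, h⟩ := neg_eq_rpow ha hz
  have h1 := ml_nonneg ha ha1 ht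
  rw [← h] at h1
  exact h1.trans_lt (ml_strictMono ha ha1 (by linarith [min_le_left z 0]))

lemma ml_bound {a : ℝ} (ha : 0 < a) (ha1 : a < 1) {t : ℝ} (ht : 0 < t) :
    ML a 1 (-t ^ a) * (t ^ a / a) ≤ Real.Gamma a := by
  have h := conv_eq (b := 1) (c := a) ha ha1 one_pos ha ht
  have hi := conv_integrable (b := 1) (c := a) ha ha1 one_pos ha ht
  simp only [sub_self, Real.rpow_zero, one_mul, add_sub_cancel_left] at h hi
  have hKint : IntervalIntegrable (fun s : ℝ => (t - s) ^ (a - 1)) volume 0 t := by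
    have := (intervalIntegral.intervalIntegrable_rpow' (a := t) (b := 0)
      (r := a - 1) (by linarith)).comp_sub_left t
    simpa using this
  have hKval : ∫ s in (0:ℝ)..t, (t - s) ^ (a - 1) = t ^ a / a := by
    rw [intervalIntegral.integral_comp_sub_left (fun s => s ^ (a - 1)) t,
      integral_rpow (Or.inl (by linarith))]
    simp [Real.zero_rpow ha.ne']
  have hΓ := Real.Gamma_pos_of_pos ha
  have h2 : ML a 1 (-t ^ a) * (t ^ a / a) ≤
      ∫ s in (0:ℝ)..t, ML a 1 (-s ^ a) * (t - s) ^ (a - 1) := by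
    rw [← hKval, ← intervalIntegral.integral_const_mul]
    refine intervalIntegral.integral_mono_on_of_le_Ioo ht.le (hKint.const_mul _) hi ?_
    intro s hs
    have h2 : 0 ≤ (t - s) ^ (a - 1) := Real.rpow_nonneg (by linarith [hs.2]) _
    have h3 : ML a 1 (-t ^ a) ≤ ML a 1 (-s ^ a) := by
      refine (ml_strictMono ha ha1).monotone (neg_le_neg ?_)
      exact Real.rpow_le_rpow hs.1.le hs.2.le ha.le
    gcongr
  have h3 := ml_shift ha ha1 one_pos (-t ^ a)
  have h4 := ml_pos ha ha1 (-t ^ a)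
  rw [Real.Gamma_one] at h3
  rw [h] at h2
  have h5 : t ^ a * ML a (1 + a) (-t ^ a) ≤ 1 := by linarith
  have h6 : Real.Gamma a * (t ^ a * ML a (1 + a) (-t ^ a)) ≤ Real.Gamma a * 1 := by gcongr
  linarith

lemma ml_tendsto {a : ℝ} (ha : 0 < a) (ha1 : a < 1) : Tendsto (ML a 1) atBot (𝓝 0) := by
  have hlim : Tendsto (fun z : ℝ => a * Real.Gamma a / (-z)) atBot (𝓝 0) :=
    Tendsto.const_div_atTop tendsto_neg_atBot_atTop _
  refine tendsto_of_tendsto_of_tendsto_of_le_of_le' tendsto_const_nhds hlim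
    (Eventually.of_forall fun z => (ml_pos ha ha1 z).le) ?_
  filter_upwards [eventually_lt_atBot 0] with z hz
  obtain ⟨t, ht, h⟩ := neg_eq_rpow ha hz
  have hb := ml_bound ha ha1 ht
  rw [← h, ← mul_div_assoc, div_le_iff₀ ha, show t ^ a = -z by linarith] at hb
  rw [le_div_iff₀ (by linarith)]
  linarith

lemma cos_shift (η : ℝ) (k : ℕ) : Real.cos (η + k * π) = (-1) ^ k * Real.cos η := by
  exact Real.cos_add_nat_mul_pi η k

noncomputable def FF (α ϱ t x η : ℝ) : ℝ := ML α 1 (t ^ α * (1 - (|η| / x) ^ (2 * ϱ)))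

lemma FF_cont {α ϱ t x : ℝ} (hα : 0 < α) (hα1 : α < 1) (hϱ : 1 ≤ ϱ) :
    Continuous (FF α ϱ t x) := by
  refine (ml_continuous hα hα1 one_pos).comp ?_
  have h : Continuous fun η : ℝ => (|η| / x) ^ (2 * ϱ) :=
    (continuous_abs.div_const x).rpow_const fun _ => Or.inr (by linarith)
  fun_prop

lemma FF_anti {α ϱ t x : ℝ} (hα : 0 < α) (hα1 : α < 1) (hϱ : 1 ≤ ϱ) (ht : 0 < t) (hx : 0 < x)
    {p q : ℝ} (h : |p| < |q|) : FF α ϱ t x q < FF α ϱ t x p := by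
  refine ml_strictMono hα hα1 ?_
  have h1 : (|p| / x) ^ (2 * ϱ) < (|q| / x) ^ (2 * ϱ) := by
    refine Real.rpow_lt_rpow (by positivity) (by gcongr) (by linarith)
  have := Real.rpow_pos_of_pos ht α
  gcongr

lemma FF_tendsto {α ϱ t x : ℝ} (hα : 0 < α) (hα1 : α < 1) (hϱ : 1 ≤ ϱ) (ht : 0 < t) (hx : 0 < x) :
    Tendsto (FF α ϱ t x) atTop (𝓝 0) := by
  refine (ml_tendsto hα hα1).comp ?_
  have h1 : Tendsto (fun η : ℝ => (|η| / x) ^ (2 * ϱ)) atTop atTop :=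
    (tendsto_rpow_atTop (by linarith)).comp (tendsto_abs_atTop_atTop.atTop_div_const hx)
  have h2 : Tendsto (fun η : ℝ => 1 - (|η| / x) ^ (2 * ϱ)) atTop atBot := by
    simp_rw [sub_eq_add_neg]
    exact tendsto_atBot_add_const_left _ _ (tendsto_neg_atTop_atBot.comp h1)
  exact h2.const_mul_atBot (Real.rpow_pos_of_pos ht α)

noncomputable def bb (α ϱ t x : ℝ) (k : ℕ) : ℝ :=
  ∫ η in (-(π / 2))..(π / 2), FF α ϱ t x (η + k * π) * Real.cos η

lemma aCoef_pos_eq {α ϱ t x : ℝ} (hx : 0 < x) {k : ℕ} (hk : 1 ≤ k) :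
    aCoef α ϱ t x k = x⁻¹ * bb α ϱ t x k := by
  have hk' : (1:ℝ) ≤ k := by exact_mod_cast hk
  have hpi := Real.pi_pos
  rw [aCoef, if_neg (by omega), bb]
  have h := intervalIntegral.integral_comp_mul_sub (a := (2 * (k : ℝ) - 1) * π / (2 * x))
    (b := (2 * (k : ℝ) + 1) * π / (2 * x))
    (fun η => FF α ϱ t x (η + k * π) * Real.cos η) hx.ne' (k * π)
  have e1 : x * ((2 * (k : ℝ) - 1) * π / (2 * x)) - k * π = -(π / 2) := by field_simp; ring
  have e2 : x * ((2 * (k : ℝ) + 1) * π / (2 * x)) - k * π = π / 2 := by field_simp; ring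
  rw [e1, e2, smul_eq_mul] at h
  rw [← h, ← intervalIntegral.integral_const_mul]
  refine intervalIntegral.integral_congr fun ξ hξ => ?_
  have hle : (2 * (k : ℝ) - 1) * π / (2 * x) ≤ (2 * (k : ℝ) + 1) * π / (2 * x) := by
    gcongr; linarith
  rw [Set.uIcc_of_le hle] at hξ
  have hξ0 : 0 ≤ ξ := by
    refine le_trans ?_ hξ.1
    have : 0 ≤ 2 * (k : ℝ) - 1 := by linarith
    positivity
  have hc := cos_shift (x * ξ - k * π) k
  rw [sub_add_cancel] at hc
  have hsq : ((-1:ℝ) ^ k) * (-1) ^ k = 1 := by rw [← mul_pow]; simp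
  simp only [FF, sub_add_cancel]
  rw [abs_of_nonneg (by positivity), mul_div_cancel_left₀ _ hx.ne', hc, ← mul_assoc,
    mul_comm ((-1:ℝ) ^ k), mul_assoc, ← mul_assoc ((-1:ℝ) ^ k), hsq, one_mul]

lemma aCoef_zero_eq {α ϱ t x : ℝ} (hα : 0 < α) (hα1 : α < 1) (hϱ : 1 ≤ ϱ) (hx : 0 < x) :
    2 * aCoef α ϱ t x 0 = x⁻¹ * bb α ϱ t x 0 := by
  have hpi := Real.pi_pos
  have hc : Continuous fun η => FF α ϱ t x η * Real.cos η := (FF_cont hα hα1 hϱ).mul Real.continuous_cos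
  have hb : bb α ϱ t x 0 = 2 * ∫ η in (0:ℝ)..(π / 2), FF α ϱ t x η * Real.cos η := by
    simp only [bb, Nat.cast_zero, zero_mul, add_zero]
    rw [← intervalIntegral.integral_add_adjacent_intervals (b := 0) (hc.intervalIntegrable _ _)
      (hc.intervalIntegrable _ _)]
    have h := intervalIntegral.integral_comp_neg (a := 0) (b := π / 2)
      (fun η => FF α ϱ t x η * Real.cos η)
    rw [neg_zero] at h
    rw [← h]
    simp only [FF, abs_neg, Real.cos_neg]
    ring
  rw [hb, aCoef, if_pos rfl]
  have h := intervalIntegral.integral_comp_mul_left (a := 0) (b := π / (2 * x))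
    (fun η => FF α ϱ t x η * Real.cos η) hx.ne'
  have e2 : x * (π / (2 * x)) = π / 2 := by field_simp
  rw [mul_zero, e2, smul_eq_mul] at h
  rw [mul_left_comm, ← h]
  congr 1
  refine intervalIntegral.integral_congr fun ξ hξ => ?_
  rw [Set.uIcc_of_le (by positivity)] at hξ
  have := hξ.1
  simp only [FF]
  rw [abs_of_nonneg (by positivity), mul_div_cancel_left₀ _ hx.ne']

lemma bb_pos {α ϱ t x : ℝ} (hα : 0 < α) (hα1 : α < 1) (hϱ : 1 ≤ ϱ) (k : ℕ) :
    0 < bb α ϱ t x k := by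
  have hpi := Real.pi_pos
  have hF := FF_cont (t := t) (x := x) hα hα1 hϱ
  refine intervalIntegral.intervalIntegral_pos_of_pos_on ?_ ?_ (by linarith)
  · exact Continuous.intervalIntegrable (by fun_prop) _ _
  · intro η hη
    exact mul_pos (ml_pos hα hα1 _) (Real.cos_pos_of_mem_Ioo hη)

lemma bb_anti {α ϱ t x : ℝ} (hα : 0 < α) (hα1 : α < 1) (hϱ : 1 ≤ ϱ) (ht : 0 < t) (hx : 0 < x)
    (k : ℕ) : bb α ϱ t x (k + 1) < bb α ϱ t x k := by
  have hpi := Real.pi_pos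
  have hF := FF_cont (t := t) (x := x) hα hα1 hϱ
  have key : ∀ η ∈ Set.Ioc (-(π / 2)) (π / 2),
      FF α ϱ t x (η + ((k + 1 : ℕ) : ℝ) * π) < FF α ϱ t x (η + k * π) := by
    intro η hη
    apply FF_anti hα hα1 hϱ ht hx
    have hk : 0 ≤ (k : ℝ) * π := by positivity
    push_cast
    rw [add_mul, one_mul, abs_of_nonneg (a := η + (k * π + π)) (by linarith [hη.1]), abs_lt]
    constructor <;> linarith [hη.1]
  refine intervalIntegral.integral_lt_integral_of_continuousOn_of_le_of_exists_lt (by linarith)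
    (Continuous.continuousOn (by fun_prop)) (Continuous.continuousOn (by fun_prop)) ?_ ?_
  · intro η hη
    have := Real.cos_nonneg_of_mem_Icc ⟨hη.1.le, hη.2⟩
    have := (key η hη).le
    gcongr
  · refine ⟨0, ⟨by linarith, by linarith⟩, ?_⟩
    have := key 0 ⟨by linarith, by linarith⟩
    simpa using this

lemma bb_tendsto {α ϱ t x : ℝ} (hα : 0 < α) (hα1 : α < 1) (hϱ : 1 ≤ ϱ) (ht : 0 < t) (hx : 0 < x) :
    Tendsto (bb α ϱ t x) atTop (𝓝 0) := by
  have hpi := Real.pi_pos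
  have harg : Tendsto (fun k : ℕ => (k : ℝ) * π - π) atTop atTop :=
    tendsto_atTop_add_const_right _ _ (tendsto_natCast_atTop_atTop.atTop_mul_const hpi)
  have hlim := ((FF_tendsto hα hα1 hϱ ht hx).comp harg).mul_const π
  rw [zero_mul] at hlim
  refine tendsto_of_tendsto_of_tendsto_of_le_of_le' tendsto_const_nhds hlim
    (Eventually.of_forall fun k => (bb_pos hα hα1 hϱ k).le) ?_
  filter_upwards [eventually_ge_atTop 1] with k hk
  have hk' : (1:ℝ) * π ≤ k * π := by gcongr; exact_mod_cast hk
  have h := intervalIntegral.norm_integral_le_of_norm_le_const (a := -(π / 2)) (b := π / 2)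
    (f := fun η => FF α ϱ t x (η + k * π) * Real.cos η) (C := FF α ϱ t x (k * π - π)) (by
      intro η hη
      rw [Set.uIoc_of_le (by linarith)] at hη
      have h1 : FF α ϱ t x (η + k * π) < FF α ϱ t x (k * π - π) := by
        apply FF_anti hα hα1 hϱ ht hx
        rw [abs_of_nonneg (by linarith), abs_of_nonneg (by linarith [hη.1])]
        linarith [hη.1]
      have h0 : 0 < FF α ϱ t x (η + k * π) := ml_pos hα hα1 _
      rw [norm_mul, Real.norm_eq_abs, Real.norm_eq_abs, abs_of_pos h0]
      calc _ ≤ FF α ϱ t x (η + k * π) * 1 := by gcongr; exact Real.abs_cos_le_one _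
        _ ≤ _ := by linarith)
  have e : |π / 2 - -(π / 2)| = π := by
    rw [abs_of_nonneg (by linarith)]; ring
  rw [e] at h
  exact (le_abs_self _).trans h

theorem stmt15 (α ϱ t x : ℝ) (hα : α ∈ Set.Ioo (0 : ℝ) 1) (hϱ : 1 ≤ ϱ)
    (ht : 0 < t) (hx : 0 < x) :
    (∀ k : ℕ, 0 < aCoef α ϱ t x k) ∧
    Tendsto (fun k : ℕ => aCoef α ϱ t x k) atTop (nhds 0) ∧
    (∀ k : ℕ, 1 ≤ k → aCoef α ϱ t x (k + 1) < aCoef α ϱ t x k) ∧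
    aCoef α ϱ t x 1 < 2 * aCoef α ϱ t x 0 := by
  obtain ⟨hα0, hα1⟩ := hα
  have hxi : 0 < x⁻¹ := inv_pos.2 hx
  have h0 := aCoef_zero_eq (t := t) hα0 hα1 hϱ hx
  refine ⟨fun k => ?_, ?_, fun k hk => ?_, ?_⟩
  · have hb := mul_pos hxi (bb_pos (t := t) (x := x) hα0 hα1 hϱ k)
    rcases Nat.eq_zero_or_pos k with rfl | hk
    · linarith
    · rwa [aCoef_pos_eq hx hk]
  · have h := (bb_tendsto hα0 hα1 hϱ ht hx).const_mul x⁻¹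
    rw [mul_zero] at h
    refine h.congr' ?_
    filter_upwards [eventually_ge_atTop 1] with k hk
    rw [aCoef_pos_eq hx hk]
  · rw [aCoef_pos_eq hx hk, aCoef_pos_eq hx (by omega)]
    exact mul_lt_mul_of_pos_left (bb_anti hα0 hα1 hϱ ht hx k) hxi
  · rw [h0, aCoef_pos_eq hx le_rfl]
    exact mul_lt_mul_of_pos_left (bb_anti hα0 hα1 hϱ ht hx 0) hxi
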